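/- Let X be a metric space with a Borel probability measure λ, let (x_j)_{j∈J} be a finite family of points of X, and let C > 0 and 0 < δ. Write N_η(A) for the open η-neighborhood of A ⊆ X, N_{−η}(A) for the complement of N_η(X \ A), M_δ g (x) = sup of g over the open ball of radius δ about x, and m_δ g (x) = inf of g over that ball. Suppose that for every subset B ⊆ X, (1−δ)·λ(N_{−δ}(B)) ≤ #{j ∈ J : x_j ∈ B} / C ≤ (1+δ)·λ(N_δ(B)). Then for every bounded nonnegative Borel function g : X → ℝ, (1−δ)·∫ m_δ(g) dλ ≤ (1/C)·Σ_{j∈J} g(x_j) ≤ (1+δ)·∫ M_δ(g) dλ. (Here m_δ(g) is upper semicontinuous and M_δ(g) is lower semicontinuous, hence both are Borel measurable.) -/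

import Mathlib

open MeasureTheory

/-- The open `η`-neighborhood of a set `A` in a metric space:
the union of the open balls of radius `η` centered at points of `A`. -/
def nbhd {X : Type*} [MetricSpace X] (η : ℝ) (A : Set X) : Set X :=
  ⋃ a ∈ A, Metric.ball a η

/-!
Layer-cake: for bounded nonnegative `f`, `∫ f dμ` is the integral over `t` of `μ {t ≤ f}`. The
superlevel sets of the local infimum and supremum of `g` are governed by those of `g` itself,
`{t ≤ m_δ g} = N_{-δ} {t ≤ g}` and `N_δ {t ≤ g} ⊆ {t ≤ M_δ g}`, so integrating the set-level
comparison of `{t ≤ g}` over `t` gives the comparison of integrals. The points `x j` enter only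
through the measure `C⁻¹ ∑ δ_{x j}`, which may be replaced by any finite measure.
-/

open Set Metric

section LocalExtrema

variable {X β : Type*} [PseudoMetricSpace X]

/-- The local supremum `M_δ g` of `g` over open `δ`-balls. As with `sSup`, the value is meaningful
only if `0 < δ` and `g` is bounded above on each of these balls. -/
def ballSup [SupSet β] (δ : ℝ) (g : X → β) (z : X) : β :=
  sSup (g '' ball z δ)

/-- The local infimum `m_δ g` of `g` over open `δ`-balls. As with `sInf`, the value is meaningful
only if `0 < δ` and `g` is bounded below on each of these balls. -/
def ballInf [InfSet β] (δ : ℝ) (g : X → β) (z : X) : β :=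
  sInf (g '' ball z δ)

section Lattice

variable [ConditionallyCompleteLattice β] {δ : ℝ} {g : X → β}

theorem le_ballSup (hg : BddAbove (range g)) {y z : X} (hy : y ∈ ball z δ) :
    g y ≤ ballSup δ g z :=
  le_csSup (hg.mono (image_subset_range g _)) (mem_image_of_mem g hy)

theorem ballInf_le (hg : BddBelow (range g)) {y z : X} (hy : y ∈ ball z δ) :
    ballInf δ g z ≤ g y :=
  csInf_le (hg.mono (image_subset_range g _)) (mem_image_of_mem g hy)

theorem ballSup_le (hδ : 0 < δ) {b : β} (hg : ∀ z, g z ≤ b) (z : X) : ballSup δ g z ≤ b :=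
  csSup_le ((nonempty_ball.2 hδ).image g) (forall_mem_image.2 fun y _ => hg y)

theorem le_ballInf (hδ : 0 < δ) {b : β} (hg : ∀ z, b ≤ g z) (z : X) : b ≤ ballInf δ g z :=
  le_csInf ((nonempty_ball.2 hδ).image g) (forall_mem_image.2 fun y _ => hg y)

theorem thickening_preimage_Ici_subset_preimage_ballSup_Ici (hg : BddAbove (range g)) (t : β) :
    thickening δ (g ⁻¹' Ici t) ⊆ ballSup δ g ⁻¹' Ici t := by
  intro z hz
  obtain ⟨y, hty, hzy⟩ := mem_thickening_iff.1 hz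
  exact hty.trans (le_ballSup hg (mem_ball'.2 hzy))

end Lattice

variable [ConditionallyCompleteLinearOrder β] {δ : ℝ} {g : X → β}

theorem preimage_ballSup_Ioi (hδ : 0 < δ) (hg : BddAbove (range g)) (t : β) :
    ballSup δ g ⁻¹' Ioi t = thickening δ (g ⁻¹' Ioi t) := by
  ext z
  rw [mem_preimage, mem_Ioi, ballSup, lt_csSup_iff (hg.mono (image_subset_range g _))
    ((nonempty_ball.2 hδ).image g), exists_mem_image, mem_thickening_iff]
  simp only [mem_ball', mem_preimage, mem_Ioi, and_comm]

theorem preimage_ballInf_Iio (hδ : 0 < δ) (hg : BddBelow (range g)) (t : β) :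
    ballInf δ g ⁻¹' Iio t = thickening δ (g ⁻¹' Iio t) :=
  preimage_ballSup_Ioi (β := βᵒᵈ) hδ hg t

theorem preimage_ballInf_Ici (hδ : 0 < δ) (hg : BddBelow (range g)) (t : β) :
    ballInf δ g ⁻¹' Ici t = (thickening δ (g ⁻¹' Ici t)ᶜ)ᶜ := by
  rw [← preimage_compl, compl_Ici, ← preimage_ballInf_Iio hδ hg, ← preimage_compl, compl_Iio]

theorem lowerSemicontinuous_ballSup (hδ : 0 < δ) (hg : BddAbove (range g)) :
    LowerSemicontinuous (ballSup δ g) :=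
  lowerSemicontinuous_iff_isOpen_preimage.2 fun t => by
    rw [preimage_ballSup_Ioi hδ hg]
    exact isOpen_thickening

theorem upperSemicontinuous_ballInf (hδ : 0 < δ) (hg : BddBelow (range g)) :
    UpperSemicontinuous (ballInf δ g) :=
  upperSemicontinuous_iff_isOpen_preimage.2 fun t => by
    rw [preimage_ballInf_Iio hδ hg]
    exact isOpen_thickening

end LocalExtrema

section LayerCake

variable {α β : Type*} [MeasurableSpace α] [MeasurableSpace β]

theorem integrableOn_measureReal_preimage_Ici (μ : Measure α) [IsFiniteMeasure μ] (f : α → ℝ)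
    (M : ℝ) : IntegrableOn (fun t => μ.real (f ⁻¹' Ici t)) (Ioc 0 M) := by
  have hanti : Antitone fun t => μ.real (f ⁻¹' Ici t) := fun s t hst =>
    measureReal_mono (preimage_mono (Ici_subset_Ici.2 hst))
  exact (hanti.locallyIntegrable.integrableOn_isCompact isCompact_Icc).mono_set Ioc_subset_Icc_self

theorem integral_eq_integral_measureReal_preimage_Ici {μ : Measure α} [IsFiniteMeasure μ]
    {f : α → ℝ} {M : ℝ} (hf : AEMeasurable f μ) (hf0 : ∀ z, 0 ≤ f z) (hfM : ∀ z, f z ≤ M) :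
    ∫ z, f z ∂μ = ∫ t in Ioc 0 M, μ.real (f ⁻¹' Ici t) := by
  have hint : Integrable f μ := .of_mem_Icc 0 M hf (.of_forall fun z => ⟨hf0 z, hfM z⟩)
  exact hint.integral_eq_integral_Ioc_meas_le (.of_forall hf0) (.of_forall hfM)

theorem mul_integral_le_mul_integral_of_measureReal_preimage_Ici_le {μ : Measure α}
    [IsFiniteMeasure μ] {ν : Measure β} [IsFiniteMeasure ν] {f : α → ℝ} {h : β → ℝ} {a b M : ℝ}
    (hf : AEMeasurable f μ) (hf0 : ∀ z, 0 ≤ f z) (hfM : ∀ z, f z ≤ M)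
    (hh : AEMeasurable h ν) (hh0 : ∀ z, 0 ≤ h z) (hhM : ∀ z, h z ≤ M)
    (hle : ∀ t, a * μ.real (f ⁻¹' Ici t) ≤ b * ν.real (h ⁻¹' Ici t)) :
    a * ∫ z, f z ∂μ ≤ b * ∫ z, h z ∂ν := by
  rw [integral_eq_integral_measureReal_preimage_Ici hf hf0 hfM,
    integral_eq_integral_measureReal_preimage_Ici hh hh0 hhM,
    ← integral_const_mul, ← integral_const_mul]
  exact setIntegral_mono ((integrableOn_measureReal_preimage_Ici μ f M).const_mul a)
    ((integrableOn_measureReal_preimage_Ici ν h M).const_mul b) hle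

end LayerCake

section Comparison

variable {X : Type*} [PseudoMetricSpace X] [MeasurableSpace X] [OpensMeasurableSpace X]
  {μ ν : Measure X} [IsFiniteMeasure μ] [IsFiniteMeasure ν] {a b δ M : ℝ} {g : X → ℝ}

theorem mul_integral_ballInf_le_integral (hδ : 0 < δ) (hg : AEMeasurable g ν)
    (hg0 : ∀ z, 0 ≤ g z) (hgM : ∀ z, g z ≤ M)
    (hle : ∀ t, a * μ.real (thickening δ (g ⁻¹' Ici t)ᶜ)ᶜ ≤ ν.real (g ⁻¹' Ici t)) :
    a * ∫ z, ballInf δ g z ∂μ ≤ ∫ z, g z ∂ν := by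
  have hbdd : BddBelow (range g) := ⟨0, forall_mem_range.2 hg0⟩
  rw [← one_mul (∫ z, g z ∂ν)]
  refine mul_integral_le_mul_integral_of_measureReal_preimage_Ici_le
    (upperSemicontinuous_ballInf hδ hbdd).measurable.aemeasurable (le_ballInf hδ hg0)
    (fun z => (ballInf_le hbdd (mem_ball_self hδ)).trans (hgM z)) hg hg0 hgM fun t => ?_
  rw [preimage_ballInf_Ici hδ hbdd, one_mul]
  exact hle t

theorem integral_le_mul_integral_ballSup (hδ : 0 < δ) (hb : 0 ≤ b) (hg : AEMeasurable g ν)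
    (hg0 : ∀ z, 0 ≤ g z) (hgM : ∀ z, g z ≤ M)
    (hle : ∀ t, ν.real (g ⁻¹' Ici t) ≤ b * μ.real (thickening δ (g ⁻¹' Ici t))) :
    ∫ z, g z ∂ν ≤ b * ∫ z, ballSup δ g z ∂μ := by
  have hbdd : BddAbove (range g) := ⟨M, forall_mem_range.2 hgM⟩
  rw [← one_mul (∫ z, g z ∂ν)]
  refine mul_integral_le_mul_integral_of_measureReal_preimage_Ici_le hg hg0 hgM
    (lowerSemicontinuous_ballSup hδ hbdd).measurable.aemeasurable
    (fun z => (hg0 z).trans (le_ballSup hbdd (mem_ball_self hδ))) (ballSup_le hδ hgM) fun t => ?_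
  calc 1 * ν.real (g ⁻¹' Ici t)
      ≤ b * μ.real (thickening δ (g ⁻¹' Ici t)) := by rw [one_mul]; exact hle t
    _ ≤ b * μ.real (ballSup δ g ⁻¹' Ici t) := by
      gcongr
      · exact measure_ne_top _ _
      · exact thickening_preimage_Ici_subset_preimage_ballSup_Ici hbdd t

end Comparison

theorem stmt3_general {X : Type*} [PseudoMetricSpace X] [MeasurableSpace X]
    [OpensMeasurableSpace X] {μ ν : Measure X} [IsFiniteMeasure μ] [IsFiniteMeasure ν]
    {a b δ : ℝ} (hδ : 0 < δ) (hb : 0 ≤ b)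
    (hequi : ∀ B, NullMeasurableSet B ν →
      a * μ.real (thickening δ Bᶜ)ᶜ ≤ ν.real B ∧ ν.real B ≤ b * μ.real (thickening δ B))
    {g : X → ℝ} (hg : AEMeasurable g ν) (hg0 : ∀ z, 0 ≤ g z)
    {M : ℝ} (hgM : ∀ z, g z ≤ M) :
    a * ∫ z, ballInf δ g z ∂μ ≤ ∫ z, g z ∂ν ∧
      ∫ z, g z ∂ν ≤ b * ∫ z, ballSup δ g z ∂μ :=
  have hlevel (t : ℝ) : NullMeasurableSet (g ⁻¹' Ici t) ν := hg.nullMeasurable measurableSet_Ici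
  ⟨mul_integral_ballInf_le_integral hδ hg hg0 hgM fun t => (hequi _ (hlevel t)).1,
    integral_le_mul_integral_ballSup hδ hb hg hg0 hgM fun t => (hequi _ (hlevel t)).2⟩

section CountingMeasure

variable {X J : Type*} [MeasurableSpace X] [Fintype J]

/-- The counting measure `C⁻¹ ∑ j, δ_{x j}` of a finite family of points, normalized by `C`, which
need not be the number of points. -/
noncomputable def normalizedCount (x : J → X) (C : ℝ) : Measure X :=
  ENNReal.ofReal C⁻¹ • ∑ j, Measure.dirac (x j)

instance (x : J → X) (C : ℝ) : IsFiniteMeasure (normalizedCount x C) :=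
  inferInstanceAs (IsFiniteMeasure (C⁻¹.toNNReal • ∑ j, Measure.dirac (x j)))

variable [MeasurableSingletonClass X] {C : ℝ}

theorem integral_normalizedCount (x : J → X) (hC : 0 ≤ C) (g : X → ℝ) :
    ∫ z, g z ∂normalizedCount x C = (∑ j, g (x j)) / C := by
  have hint (j : J) : Integrable g (Measure.dirac (x j)) := integrable_dirac (by simp)
  rw [normalizedCount, integral_smul_measure, integral_finsetSum_measure fun j _ => hint j,
    ENNReal.toReal_ofReal (inv_nonneg.2 hC), smul_eq_mul, inv_mul_eq_div]
  simp only [integral_dirac]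

theorem measureReal_normalizedCount (x : J → X) (hC : 0 ≤ C) (B : Set X) :
    (normalizedCount x C).real B = Nat.card {j // x j ∈ B} / C := by
  classical
  rw [measureReal_def, normalizedCount, Measure.smul_apply, Measure.finsetSum_apply]
  simp only [Measure.dirac_apply, indicator_apply, Pi.one_apply]
  rw [Finset.sum_boole, smul_eq_mul, ENNReal.toReal_mul, ENNReal.toReal_natCast,
    ENNReal.toReal_ofReal (inv_nonneg.2 hC), inv_mul_eq_div, Nat.card_eq_fintype_card,
    Fintype.card_subtype]

end CountingMeasure

theorem nbhd_eq_thickening {X : Type*} [MetricSpace X] (η : ℝ) (A : Set X) :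
    nbhd η A = thickening η A :=
  thickening_eq_biUnion_ball.symm

/-- From the set-level equidistribution
`(1−δ)·λ(N_{−δ}B) ≤ #{j : x j ∈ B}/C ≤ (1+δ)·λ(N_δ B)` (for all `B ⊆ X`),
deduce the function-level equidistribution
`(1−δ)·∫ m_δ(g) dλ ≤ (1/C)·Σ_j g (x j) ≤ (1+δ)·∫ M_δ(g) dλ`
for every bounded nonnegative Borel `g`, where `m_δ g x` (resp. `M_δ g x`) is the inf
(resp. sup) of `g` over the open ball of radius `δ` about `x`. -/
theorem stmt3 {X : Type*} [MetricSpace X] [MeasurableSpace X] [BorelSpace X]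
    (lam : Measure X) [IsProbabilityMeasure lam]
    {J : Type*} [Fintype J] (x : J → X)
    (C δ : ℝ) (hC : 0 < C) (hδ : 0 < δ)
    (hequi : ∀ B : Set X,
      (1 - δ) * (lam ((nbhd δ Bᶜ)ᶜ)).toReal ≤ (Nat.card {j : J // x j ∈ B} : ℝ) / C ∧
      (Nat.card {j : J // x j ∈ B} : ℝ) / C ≤ (1 + δ) * (lam (nbhd δ B)).toReal)
    (g : X → ℝ) (hg : Measurable g) (hg0 : ∀ z, 0 ≤ g z)
    (Cg : ℝ) (hgb : ∀ z, g z ≤ Cg) :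
    (1 - δ) * (∫ z, sInf (g '' Metric.ball z δ) ∂lam) ≤ (∑ j, g (x j)) / C ∧
    (∑ j, g (x j)) / C ≤ (1 + δ) * ∫ z, sSup (g '' Metric.ball z δ) ∂lam := by
  rw [← integral_normalizedCount x hC.le]
  simp only [nbhd_eq_thickening, ← measureReal_normalizedCount x hC.le] at hequi
  exact stmt3_general hδ (by linarith) (fun B _ => hequi B) hg.aemeasurable hg0 hgb
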